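/- Let f : {0,1}^n × {0,1}^n → {0,1} and let μ be a product distribution on {0,1}^n × {0,1}^n. Then there exists a universal constant C > 0 such that CC^μ_{0.49}(f) ≤ C · (log srec^μ_{1/n²,1/n²}(f))² · log n (for n ≥ 2 and srec^μ_{1/n²,1/n²}(f) ≥ 2). -/

import Mathlib

open scoped BigOperators
open scoped Classical

noncomputable section

/-! ## Probability distributions on finite types -/

/-- `p` is a probability distribution on the finite type `α`. -/
def IsDist {α : Type} [Fintype α] (p : α → ℝ) : Prop :=
  (∀ a, 0 ≤ p a) ∧ ∑ a, p a = 1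

/-- `μ` (in curried form) is a probability distribution on `X × Y`. -/
def IsDist2 {X Y : Type} [Fintype X] [Fintype Y] (μ : X → Y → ℝ) : Prop :=
  (∀ x y, 0 ≤ μ x y) ∧ ∑ x, ∑ y, μ x y = 1

/-! ## Deterministic communication protocols -/

/-- A deterministic two-party communication protocol: a finite binary tree where each
internal node is owned by Alice (`nodeA`) or Bob (`nodeB`) and is labeled by a function
of that player's input choosing one of the two children; leaves carry Boolean outputs. -/
inductive Protocol (X Y : Type) : Type
  | leaf : Bool → Protocol X Y
  | nodeA : (X → Bool) → Protocol X Y → Protocol X Y → Protocol X Y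
  | nodeB : (Y → Bool) → Protocol X Y → Protocol X Y → Protocol X Y

namespace Protocol

def eval {X Y : Type} : Protocol X Y → X → Y → Bool
  | leaf b, _, _ => b
  | nodeA g t0 t1, x, y => if g x then eval t1 x y else eval t0 x y
  | nodeB g t0 t1, x, y => if g y then eval t1 x y else eval t0 x y

/-- Depth (number of bits communicated in the worst case). -/
def depth {X Y : Type} : Protocol X Y → ℕ
  | leaf _ => 0
  | nodeA _ t0 t1 => max (depth t0) (depth t1) + 1
  | nodeB _ t0 t1 => max (depth t0) (depth t1) + 1

/-- Number of leaves. -/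
def leavesCount {X Y : Type} : Protocol X Y → ℕ
  | leaf _ => 1
  | nodeA _ t0 t1 => leavesCount t0 + leavesCount t1
  | nodeB _ t0 t1 => leavesCount t0 + leavesCount t1

/-- The sequence of bits communicated on input `(x, y)`. -/
def transcript {X Y : Type} : Protocol X Y → X → Y → List Bool
  | leaf _, _, _ => []
  | nodeA g t0 t1, x, y =>
      if g x then true :: transcript t1 x y else false :: transcript t0 x y
  | nodeB g t0 t1, x, y =>
      if g y then true :: transcript t1 x y else false :: transcript t0 x y

end Protocol

/-- Error of a deterministic protocol w.r.t. input distribution `μ`. -/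
def commErr {X Y : Type} [Fintype X] [Fintype Y]
    (μ : X → Y → ℝ) (f : X → Y → Bool) (P : Protocol X Y) : ℝ :=
  ∑ x, ∑ y, if P.eval x y ≠ f x y then μ x y else 0

/-- Distributional communication complexity `CC^μ_ε(f)`: the minimum depth of a
deterministic protocol erring with probability at most `ε` under `μ`. -/
def CCdist {X Y : Type} [Fintype X] [Fintype Y]
    (μ : X → Y → ℝ) (f : X → Y → Bool) (ε : ℝ) : ℕ :=
  sInf {d : ℕ | ∃ P : Protocol X Y, P.depth ≤ d ∧ commErr μ f P ≤ ε}

/-- The advantage `adv_μ(Π)` of a protocol w.r.t. a (not necessarily normalized) measure. -/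
def protAdv {X Y : Type} [Fintype X] [Fintype Y]
    (μ : X → Y → ℝ) (f : X → Y → Bool) (P : Protocol X Y) : ℝ :=
  ∑ x, ∑ y, if P.eval x y = f x y then μ x y else - μ x y

/-! ## Information complexity -/

/-- Probability of an event under a finite (possibly unnormalized) distribution. -/
def prOf {Ω : Type} [Fintype Ω] (p : Ω → ℝ) (q : Ω → Prop) : ℝ :=
  ∑ ω, if q ω then p ω else 0

/-- Conditional mutual information `I(A ; B | C)` (in bits) of random variables `A`, `B`, `C`
defined on a finite probability space `(Ω, p)`. -/
def condMI {Ω α β γ : Type} [Fintype Ω] (p : Ω → ℝ)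
    (A : Ω → α) (B : Ω → β) (C : Ω → γ) : ℝ :=
  ∑ ω, p ω * Real.logb 2 (
    (prOf p (fun ω' => A ω' = A ω ∧ B ω' = B ω ∧ C ω' = C ω) *
      prOf p (fun ω' => C ω' = C ω)) /
    (prOf p (fun ω' => A ω' = A ω ∧ C ω' = C ω) *
      prOf p (fun ω' => B ω' = B ω ∧ C ω' = C ω)))

/-- Internal information cost `IC^μ(Π) = I(X;T|Y) + I(Y;T|X)` of the public-coin protocol
given by a distribution `ρ` on `Fin m` together with deterministic protocols `P r`; the
transcript `T` consists of the public randomness together with the communicated bits. -/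
def infoCost {X Y : Type} [Fintype X] [Fintype Y] (μ : X → Y → ℝ)
    {m : ℕ} (ρ : Fin m → ℝ) (P : Fin m → Protocol X Y) : ℝ :=
  condMI (fun ω : X × Y × Fin m => μ ω.1 ω.2.1 * ρ ω.2.2)
      (fun ω => ω.1)
      (fun ω => (ω.2.2, (P ω.2.2).transcript ω.1 ω.2.1))
      (fun ω => ω.2.1)
  + condMI (fun ω : X × Y × Fin m => μ ω.1 ω.2.1 * ρ ω.2.2)
      (fun ω => ω.2.1)
      (fun ω => (ω.2.2, (P ω.2.2).transcript ω.1 ω.2.1))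
      (fun ω => ω.1)

/-- Error of a public-coin protocol under input distribution `μ` and coin distribution `ρ`. -/
def randErr {X Y : Type} [Fintype X] [Fintype Y] (μ : X → Y → ℝ) (f : X → Y → Bool)
    {m : ℕ} (ρ : Fin m → ℝ) (P : Fin m → Protocol X Y) : ℝ :=
  ∑ x, ∑ y, ∑ r, if (P r).eval x y ≠ f x y then μ x y * ρ r else 0

/-- `IC^μ_ε(f)`: infimum of the information cost over all public-coin protocols computing
`f` with error at most `ε` under `μ`. -/
def ICmu {X Y : Type} [Fintype X] [Fintype Y]
    (μ : X → Y → ℝ) (f : X → Y → Bool) (ε : ℝ) : ℝ :=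
  sInf { c : ℝ | ∃ (m : ℕ) (ρ : Fin m → ℝ) (P : Fin m → Protocol X Y),
    IsDist ρ ∧ randErr μ f ρ P ≤ ε ∧ c = infoCost μ ρ P }

/-- `IC_ε(f) = max_μ IC^μ_ε(f)`. -/
def IC {X Y : Type} [Fintype X] [Fintype Y] (f : X → Y → Bool) (ε : ℝ) : ℝ :=
  sSup { c : ℝ | ∃ μ : X → Y → ℝ, IsDist2 μ ∧ c = ICmu μ f ε }

/-! ## Rectangles, smooth rectangle bound and partition bound -/

/-- Total weight of rectangles containing `(x, y)`: a combinatorial rectangle is a pair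
`R = (S, T)` of finite sets, and `(x,y) ∈ R` iff `x ∈ S ∧ y ∈ T`. -/
def rcov {X Y : Type} [Fintype X] [Fintype Y]
    (w : Finset X × Finset Y → ℝ) (x : X) (y : Y) : ℝ :=
  ∑ R : Finset X × Finset Y, if x ∈ R.1 ∧ y ∈ R.2 then w R else 0

/-- `μ(R)` for a rectangle `R`. -/
def rMass {X Y : Type} [Fintype X] [Fintype Y]
    (μ : X → Y → ℝ) (R : Finset X × Finset Y) : ℝ :=
  ∑ x, ∑ y, if x ∈ R.1 ∧ y ∈ R.2 then μ x y else 0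

/-- `μ_z(R) = μ(R ∩ f⁻¹(z))` for a rectangle `R`. -/
def rMassZ {X Y : Type} [Fintype X] [Fintype Y]
    (μ : X → Y → ℝ) (f : X → Y → Bool) (z : Bool) (R : Finset X × Finset Y) : ℝ :=
  ∑ x, ∑ y, if (x ∈ R.1 ∧ y ∈ R.2) ∧ f x y = z then μ x y else 0

/-- `μ_z = μ(f⁻¹(z))`. -/
def totalZ {X Y : Type} [Fintype X] [Fintype Y]
    (μ : X → Y → ℝ) (f : X → Y → Bool) (z : Bool) : ℝ :=
  ∑ x, ∑ y, if f x y = z then μ x y else 0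

/-- `|μ|`, the total mass of a measure. -/
def totalMass {X Y : Type} [Fintype X] [Fintype Y] (μ : X → Y → ℝ) : ℝ :=
  ∑ x, ∑ y, μ x y

/-- Restriction of a measure to a rectangle. -/
def restrictRect {X Y : Type} (μ : X → Y → ℝ) (R : Finset X × Finset Y) : X → Y → ℝ :=
  fun x y => if x ∈ R.1 ∧ y ∈ R.2 then μ x y else 0

/-- Distributional smooth rectangle bound `srec^{z,μ}_{ε,δ}(f)` (LP optimal value). -/
def srecZmu {X Y : Type} [Fintype X] [Fintype Y]
    (μ : X → Y → ℝ) (f : X → Y → Bool) (z : Bool) (ε δ : ℝ) : ℝ :=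
  sInf { v : ℝ | ∃ w : Finset X × Finset Y → ℝ,
    (∀ R, 0 ≤ w R) ∧
    ((1 - ε) * totalZ μ f z ≤ ∑ x, ∑ y, if f x y = z then μ x y * rcov w x y else 0) ∧
    (∀ x y, f x y ≠ z → rcov w x y ≤ δ) ∧
    (∀ x y, rcov w x y ≤ 1) ∧
    v = ∑ R : Finset X × Finset Y, w R }

/-- `srec^μ_{ε,δ}(f) = max{srec^{0,μ}_{ε,δ}(f), srec^{1,μ}_{ε,δ}(f)}`. -/
def srecMu {X Y : Type} [Fintype X] [Fintype Y]
    (μ : X → Y → ℝ) (f : X → Y → Bool) (ε δ : ℝ) : ℝ :=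
  max (srecZmu μ f false ε δ) (srecZmu μ f true ε δ)

/-- Smooth rectangle bound `srec^z_{ε,δ}(f)` (LP optimal value). -/
def srecZ {X Y : Type} [Fintype X] [Fintype Y]
    (f : X → Y → Bool) (z : Bool) (ε δ : ℝ) : ℝ :=
  sInf { v : ℝ | ∃ w : Finset X × Finset Y → ℝ,
    (∀ R, 0 ≤ w R) ∧
    (∀ x y, f x y = z → 1 - ε ≤ rcov w x y) ∧
    (∀ x y, f x y ≠ z → rcov w x y ≤ δ) ∧
    (∀ x y, rcov w x y ≤ 1) ∧
    v = ∑ R : Finset X × Finset Y, w R }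

/-- `srec_{ε,δ}(f) = max{srec^0_{ε,δ}(f), srec^1_{ε,δ}(f)}`. -/
def srec {X Y : Type} [Fintype X] [Fintype Y] (f : X → Y → Bool) (ε δ : ℝ) : ℝ :=
  max (srecZ f false ε δ) (srecZ f true ε δ)

/-- Partition bound `prt_ε(f)` (LP optimal value). -/
def prt {X Y : Type} [Fintype X] [Fintype Y] (f : X → Y → Bool) (ε : ℝ) : ℝ :=
  sInf { v : ℝ | ∃ w : Bool → Finset X × Finset Y → ℝ,
    (∀ z R, 0 ≤ w z R) ∧
    (∀ x y, 1 - ε ≤ rcov (w (f x y)) x y) ∧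
    (∀ x y, rcov (w false) x y + rcov (w true) x y = 1) ∧
    v = ∑ R : Finset X × Finset Y, (w false R + w true R) }

/-! ### General-output versions -/

/-- Smooth rectangle bound `srec^z_{ε,δ}(f)` for general output alphabet. -/
def srecZgen {X Y Z : Type} [Fintype X] [Fintype Y]
    (f : X → Y → Z) (z : Z) (ε δ : ℝ) : ℝ :=
  sInf { v : ℝ | ∃ w : Finset X × Finset Y → ℝ,
    (∀ R, 0 ≤ w R) ∧
    (∀ x y, f x y = z → 1 - ε ≤ rcov w x y) ∧
    (∀ x y, f x y ≠ z → rcov w x y ≤ δ) ∧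
    (∀ x y, rcov w x y ≤ 1) ∧
    v = ∑ R : Finset X × Finset Y, w R }

/-- `srec_{ε,δ}(f) = max_{z ∈ Z} srec^z_{ε,δ}(f)`. -/
def srecGen {X Y Z : Type} [Fintype X] [Fintype Y] [Fintype Z]
    (f : X → Y → Z) (ε δ : ℝ) : ℝ :=
  sSup (Set.range fun z : Z => srecZgen f z ε δ)

/-- Distributional smooth rectangle bound for general output alphabet. -/
def srecZmuGen {X Y Z : Type} [Fintype X] [Fintype Y]
    (μ : X → Y → ℝ) (f : X → Y → Z) (z : Z) (ε δ : ℝ) : ℝ :=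
  sInf { v : ℝ | ∃ w : Finset X × Finset Y → ℝ,
    (∀ R, 0 ≤ w R) ∧
    ((1 - ε) * (∑ x, ∑ y, if f x y = z then μ x y else 0) ≤
      ∑ x, ∑ y, if f x y = z then μ x y * rcov w x y else 0) ∧
    (∀ x y, f x y ≠ z → rcov w x y ≤ δ) ∧
    (∀ x y, rcov w x y ≤ 1) ∧
    v = ∑ R : Finset X × Finset Y, w R }

/-- `srec^μ_{ε,δ}(f) = max_{z ∈ Z} srec^{z,μ}_{ε,δ}(f)`. -/
def srecMuGen {X Y Z : Type} [Fintype X] [Fintype Y] [Fintype Z]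
    (μ : X → Y → ℝ) (f : X → Y → Z) (ε δ : ℝ) : ℝ :=
  sSup (Set.range fun z : Z => srecZmuGen μ f z ε δ)

/-- Partition bound for general output alphabet. -/
def prtGen {X Y Z : Type} [Fintype X] [Fintype Y] [Fintype Z]
    (f : X → Y → Z) (ε : ℝ) : ℝ :=
  sInf { v : ℝ | ∃ w : Z → Finset X × Finset Y → ℝ,
    (∀ z R, 0 ≤ w z R) ∧
    (∀ x y, 1 - ε ≤ rcov (w (f x y)) x y) ∧
    (∀ x y, (∑ z : Z, rcov (w z) x y) = 1) ∧
    v = ∑ z : Z, ∑ R : Finset X × Finset Y, w z R }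

/-! ## Decision trees, subcubes and the query partition bound -/

/-- Deterministic decision trees on `n` input bits. -/
inductive DTree (n : ℕ) : Type
  | leaf : Bool → DTree n
  | node : Fin n → DTree n → DTree n → DTree n

def DTree.eval {n : ℕ} : DTree n → (Fin n → Bool) → Bool
  | .leaf b, _ => b
  | .node i t0 t1, x => if x i then DTree.eval t1 x else DTree.eval t0 x

def DTree.depth {n : ℕ} : DTree n → ℕ
  | .leaf _ => 0
  | .node _ t0 t1 => max (DTree.depth t0) (DTree.depth t1) + 1

/-- Error of a decision tree w.r.t. the input distribution `μ`. -/
def qErr {n : ℕ} (μ : (Fin n → Bool) → ℝ) (g : (Fin n → Bool) → Bool) (T : DTree n) : ℝ :=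
  ∑ x, if T.eval x ≠ g x then μ x else 0

/-- Distributional query complexity `QC^μ_ε(g)`: minimum depth of a deterministic decision
tree erring with probability at most `ε` under `μ`. -/
def QCdist {n : ℕ} (μ : (Fin n → Bool) → ℝ) (g : (Fin n → Bool) → Bool) (ε : ℝ) : ℕ :=
  sInf {d : ℕ | ∃ T : DTree n, T.depth ≤ d ∧ qErr μ g T ≤ ε}

/-- A subcube of `{0,1}ⁿ`, given by its support pattern `s ∈ {0,1,⋆}ⁿ`. -/
abbrev Subcube (n : ℕ) := Fin n → Option Bool

/-- Membership in a subcube. -/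
def memCube {n : ℕ} (A : Subcube n) (x : Fin n → Bool) : Prop :=
  ∀ i, ∀ b, A i = some b → x i = b

/-- Size of (the support of) a subcube. -/
def cubeSize {n : ℕ} (A : Subcube n) : ℕ :=
  (Finset.univ.filter fun i => (A i).isSome).card

/-- Total weight of subcubes containing `x`. -/
def cubeCov {n : ℕ} (w : Subcube n → ℝ) (x : Fin n → Bool) : ℝ :=
  ∑ A : Subcube n, if memCube A x then w A else 0

/-- Query partition bound `qprt_ε(g)` (LP optimal value). -/
def qprt {n : ℕ} (g : (Fin n → Bool) → Bool) (ε : ℝ) : ℝ :=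
  sInf { v : ℝ | ∃ w : Bool → Subcube n → ℝ,
    (∀ z A, 0 ≤ w z A) ∧
    (∀ x, 1 - ε ≤ cubeCov (w (g x)) x) ∧
    (∀ x, cubeCov (w false) x + cubeCov (w true) x = 1) ∧
    v = ∑ A : Subcube n, (w false A + w true A) * 2 ^ cubeSize A }

/-- The bit-wise product distribution on `{0,1}ⁿ` with `p_i(1) = p i`, `p_i(0) = 1 - p i`. -/
def bitProd {n : ℕ} (p : Fin n → ℝ) : (Fin n → Bool) → ℝ :=
  fun x => ∏ i, if x i then p i else 1 - p i

/-- `μ(A)` for a subcube (or any set given by a membership predicate). -/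
def cubeMass {n : ℕ} (μ : (Fin n → Bool) → ℝ) (A : Subcube n) : ℝ :=
  ∑ x, if memCube A x then μ x else 0

/-- `μ_z(A) = μ(A ∩ g⁻¹(z))` for a subcube `A`. -/
def cubeMassZ {n : ℕ} (μ : (Fin n → Bool) → ℝ) (g : (Fin n → Bool) → Bool)
    (z : Bool) (A : Subcube n) : ℝ :=
  ∑ x, if memCube A x ∧ g x = z then μ x else 0

/-- `μ_z = μ(g⁻¹(z))`. -/
def qTotalZ {n : ℕ} (μ : (Fin n → Bool) → ℝ) (g : (Fin n → Bool) → Bool) (z : Bool) : ℝ :=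
  ∑ x, if g x = z then μ x else 0

/-- Mass of a finite set of pairs under the product measure `μA ⊗ μB`. -/
def pairMass {X Y : Type} (μA : X → ℝ) (μB : Y → ℝ) (A : Finset (X × Y)) : ℝ :=
  ∑ q ∈ A, μA q.1 * μB q.2

end

section ProtocolBalancing

variable {X Y : Type}

/-- Any protocol with more than `t` leaves contains a subtree `Q` with between `t` and `2 * t`
leaves; membership in its rectangle `S × T` reduces the evaluation to `Q` or to the pruned
protocol `R`. -/
lemma Protocol.exists_subtree (t : ℕ) (ht : 1 ≤ t) (P : Protocol X Y) (hP : t < P.leavesCount) :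
    ∃ (S : X → Bool) (T : Y → Bool) (Q R : Protocol X Y),
      (∀ x y, P.eval x y = if S x then (if T y then Q.eval x y else R.eval x y)
        else R.eval x y) ∧
      t < Q.leavesCount ∧ Q.leavesCount ≤ 2 * t ∧
      R.leavesCount + Q.leavesCount ≤ P.leavesCount + 1 := by
  induction P with
  | leaf b => simp [Protocol.leavesCount] at hP; omega
  | nodeA g P0 P1 ih0 ih1 =>
    simp only [Protocol.leavesCount] at hP ⊢
    by_cases h0 : t < P0.leavesCount
    · obtain ⟨S, T, Q, R, he, h1, h2, h3⟩ := ih0 h0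
      refine ⟨fun x => !g x && S x, T, Q, .nodeA g R P1, ?_, h1, h2, ?_⟩
      · intro x y
        simp only [Protocol.eval, he]
        by_cases hg : g x = true <;> simp [hg]
      · simp only [Protocol.leavesCount]; omega
    by_cases h0' : t < P1.leavesCount
    · obtain ⟨S, T, Q, R, he, h1, h2, h3⟩ := ih1 h0'
      refine ⟨fun x => g x && S x, T, Q, .nodeA g P0 R, ?_, h1, h2, ?_⟩
      · intro x y
        simp only [Protocol.eval, he]
        by_cases hg : g x = true <;> simp [hg]
      · simp only [Protocol.leavesCount]; omega
    refine ⟨fun _ => true, fun _ => true, .nodeA g P0 P1, .leaf false, ?_, ?_, ?_, ?_⟩ <;>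
      simp [Protocol.leavesCount] <;> omega
  | nodeB g P0 P1 ih0 ih1 =>
    simp only [Protocol.leavesCount] at hP ⊢
    by_cases h0 : t < P0.leavesCount
    · obtain ⟨S, T, Q, R, he, h1, h2, h3⟩ := ih0 h0
      refine ⟨S, fun y => !g y && T y, Q, .nodeB g R P1, ?_, h1, h2, ?_⟩
      · intro x y
        simp only [Protocol.eval, he]
        by_cases hg : g y = true <;> simp [hg]
      · simp only [Protocol.leavesCount]; omega
    by_cases h0' : t < P1.leavesCount
    · obtain ⟨S, T, Q, R, he, h1, h2, h3⟩ := ih1 h0'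
      refine ⟨S, fun y => g y && T y, Q, .nodeB g P0 R, ?_, h1, h2, ?_⟩
      · intro x y
        simp only [Protocol.eval, he]
        by_cases hg : g y = true <;> simp [hg]
      · simp only [Protocol.leavesCount]; omega
    refine ⟨fun _ => true, fun _ => true, .nodeB g P0 P1, .leaf false, ?_, ?_, ?_, ?_⟩ <;>
      simp [Protocol.leavesCount] <;> omega

lemma Protocol.depth_lt_leavesCount (P : Protocol X Y) : P.depth < P.leavesCount := by
  induction P with
  | leaf b => simp [Protocol.depth, Protocol.leavesCount]
  | nodeA g P0 P1 ih0 ih1 => simp only [Protocol.depth, Protocol.leavesCount]; omega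
  | nodeB g P0 P1 ih0 ih1 => simp only [Protocol.depth, Protocol.leavesCount]; omega

/-- Protocols can be balanced: the depth becomes logarithmic in the number of leaves. -/
lemma Protocol.exists_balanced (j : ℕ) (P : Protocol X Y)
    (hP : P.leavesCount * 3 ^ j ≤ 8 * 4 ^ j) :
    ∃ P' : Protocol X Y, P'.depth ≤ 7 + 2 * j ∧ ∀ x y, P'.eval x y = P.eval x y := by
  induction j generalizing P with
  | zero =>
    have := P.depth_lt_leavesCount
    exact ⟨P, by simp at hP; omega, fun _ _ => rfl⟩
  | succ j ih =>
    by_cases hs : P.leavesCount < 8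
    · have := P.depth_lt_leavesCount
      exact ⟨P, by omega, fun _ _ => rfl⟩
    obtain ⟨S, T, Q, R, he, h1, h2, h3⟩ :=
      P.exists_subtree (P.leavesCount / 3) (by omega) (by omega)
    have key : ∀ N : ℕ, 4 * N ≤ 3 * P.leavesCount → N * 3 ^ j ≤ 8 * 4 ^ j := by
      intro N hN
      rw [pow_succ, pow_succ] at hP
      have := Nat.mul_le_mul_right (3 ^ j) hN
      nlinarith
    obtain ⟨Q', hQd, hQe⟩ := ih Q (key _ (by omega))
    obtain ⟨R', hRd, hRe⟩ := ih R (key _ (by omega))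
    refine ⟨.nodeA S R' (.nodeB T R' Q'), ?_, ?_⟩
    · simp only [Protocol.depth]; omega
    · intro x y
      simp only [Protocol.eval, he, hQe, hRe]

/-- If Alice's input is determined by `k` bits, it can be sent to Bob, who then answers. -/
lemma Protocol.exists_depth_le_of_injective (k : ℕ) (f : X → Y → Bool) (c : X → Fin k → Bool)
    (s : Set X) (hc : ∀ x ∈ s, ∀ x' ∈ s, c x = c x' → x = x') :
    ∃ P : Protocol X Y, P.depth ≤ k + 1 ∧ ∀ x ∈ s, ∀ y, P.eval x y = f x y := by
  induction k generalizing s with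
  | zero =>
    by_cases hs : s.Nonempty
    · obtain ⟨x₀, hx₀⟩ := hs
      refine ⟨.nodeB (f x₀) (.leaf false) (.leaf true), by simp [Protocol.depth], ?_⟩
      intro x hx y
      rw [hc x hx x₀ hx₀ (Subsingleton.elim _ _)]
      simp only [Protocol.eval]
      by_cases hf : f x₀ y = true <;> simp [hf]
    · exact ⟨.leaf false, by simp [Protocol.depth], fun x hx => absurd ⟨x, hx⟩ hs⟩
  | succ k ih =>
    have hb : ∀ b : Bool, ∃ P : Protocol X Y, P.depth ≤ k + 1 ∧
        ∀ x ∈ {x ∈ s | c x 0 = b}, ∀ y, P.eval x y = f x y := by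
      intro b
      refine ih (fun x i => c x i.succ) _ ?_
      rintro x ⟨hx, hxb⟩ x' ⟨hx', hxb'⟩ h
      refine hc x hx x' hx' (funext fun i => ?_)
      refine Fin.cases (hxb.trans hxb'.symm) (fun i => congrFun h i) i
    obtain ⟨P0, h0, e0⟩ := hb false
    obtain ⟨P1, h1, e1⟩ := hb true
    refine ⟨.nodeA (fun x => c x 0) P0 P1, by simp only [Protocol.depth]; omega, ?_⟩
    intro x hx y
    simp only [Protocol.eval]
    by_cases h : c x 0 = true
    · simpa [h] using e1 x ⟨hx, h⟩ y
    · simpa [h] using e0 x ⟨hx, by simpa using h⟩ y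

end ProtocolBalancing

noncomputable section RectangleSums

variable {X Y : Type}

/-- The sum of `g` over the rectangle `A × B`. -/
def rectSum (g : X → Y → ℝ) (A : Finset X) (B : Finset Y) : ℝ :=
  ∑ x ∈ A, ∑ y ∈ B, g x y

/-- The mass of `A × B` under the product of `μA` and `μB`. -/
def rectMass (μA : X → ℝ) (μB : Y → ℝ) (A : Finset X) (B : Finset Y) : ℝ :=
  rectSum (fun x y => μA x * μB y) A B

/-- The mass of the inputs in `A × B` with `f`-value `z`. -/
def rectMassZ (μA : X → ℝ) (μB : Y → ℝ) (f : X → Y → Bool) (z : Bool)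
    (A : Finset X) (B : Finset Y) : ℝ :=
  rectSum (fun x y => if f x y = z then μA x * μB y else 0) A B

/-- The mass of the inputs in `A × B` with `f`-value `z` that the weighting `w` leaves
uncovered. -/
def deficit [Fintype X] [Fintype Y] (μA : X → ℝ) (μB : Y → ℝ) (f : X → Y → Bool) (z : Bool)
    (w : Finset X × Finset Y → ℝ) (A : Finset X) (B : Finset Y) : ℝ :=
  rectSum (fun x y => if f x y = z then μA x * μB y * (1 - rcov w x y) else 0) A B

/-- The mass of the inputs in `A × B` on which the protocol errs. -/
def rectErr (μA : X → ℝ) (μB : Y → ℝ) (f : X → Y → Bool) (P : Protocol X Y)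
    (A : Finset X) (B : Finset Y) : ℝ :=
  rectSum (fun x y => if P.eval x y ≠ f x y then μA x * μB y else 0) A B

lemma rectSum_mono {g h : X → Y → ℝ} {A : Finset X} {B : Finset Y}
    (H : ∀ x ∈ A, ∀ y ∈ B, g x y ≤ h x y) : rectSum g A B ≤ rectSum h A B :=
  Finset.sum_le_sum fun x hx => Finset.sum_le_sum fun y hy => H x hx y hy

lemma rectSum_congr {g h : X → Y → ℝ} {A : Finset X} {B : Finset Y}
    (H : ∀ x ∈ A, ∀ y ∈ B, g x y = h x y) : rectSum g A B = rectSum h A B :=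
  Finset.sum_congr rfl fun x hx => Finset.sum_congr rfl fun y hy => H x hx y hy

lemma rectSum_nonneg {g : X → Y → ℝ} {A : Finset X} {B : Finset Y}
    (H : ∀ x y, 0 ≤ g x y) : 0 ≤ rectSum g A B :=
  Finset.sum_nonneg fun x _ => Finset.sum_nonneg fun y _ => H x y

lemma rectSum_add (g h : X → Y → ℝ) (A : Finset X) (B : Finset Y) :
    rectSum (fun x y => g x y + h x y) A B = rectSum g A B + rectSum h A B := by
  simp [rectSum, Finset.sum_add_distrib]

lemma rectSum_const_mul (c : ℝ) (g : X → Y → ℝ) (A : Finset X) (B : Finset Y) :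
    rectSum (fun x y => c * g x y) A B = c * rectSum g A B := by
  simp [rectSum, Finset.mul_sum]

lemma rectSum_sdiff_left (g : X → Y → ℝ) {S A : Finset X} (B : Finset Y) (h : S ⊆ A) :
    rectSum g A B = rectSum g S B + rectSum g (A \ S) B := by
  rw [add_comm]
  exact (Finset.sum_sdiff h).symm

lemma rectSum_sdiff_right (g : X → Y → ℝ) (A : Finset X) {T B : Finset Y} (h : T ⊆ B) :
    rectSum g A B = rectSum g A T + rectSum g A (B \ T) := by
  rw [add_comm, rectSum, rectSum, rectSum, ← Finset.sum_add_distrib]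
  exact Finset.sum_congr rfl fun x _ => (Finset.sum_sdiff h).symm

lemma rectMass_eq_mul (μA : X → ℝ) (μB : Y → ℝ) (A : Finset X) (B : Finset Y) :
    rectMass μA μB A B = (∑ x ∈ A, μA x) * ∑ y ∈ B, μB y := by
  simp [rectMass, rectSum, Finset.sum_mul_sum]

variable [Fintype X] [Fintype Y]

/-- Double counting of the total coverage of a rectangle. -/
lemma rectSum_mul_rcov (g : X → Y → ℝ) (w : Finset X × Finset Y → ℝ)
    (A : Finset X) (B : Finset Y) :
    rectSum (fun x y => g x y * rcov w x y) A B =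
      ∑ R : Finset X × Finset Y, w R * rectSum g (A ∩ R.1) (B ∩ R.2) := by
  have h1 : ∀ R : Finset X × Finset Y, w R * rectSum g (A ∩ R.1) (B ∩ R.2) =
      rectSum (fun x y => if x ∈ R.1 ∧ y ∈ R.2 then g x y * w R else 0) A B := by
    intro R
    unfold rectSum
    rw [← Finset.filter_mem_eq_inter, Finset.sum_filter, Finset.mul_sum]
    refine Finset.sum_congr rfl fun x _ => ?_
    rw [← Finset.filter_mem_eq_inter, Finset.sum_filter]
    by_cases hx : x ∈ R.1 <;> simp [hx, Finset.mul_sum, mul_comm]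
  simp_rw [h1]
  unfold rectSum rcov
  symm
  rw [Finset.sum_comm]
  refine Finset.sum_congr rfl fun x _ => ?_
  rw [Finset.sum_comm]
  refine Finset.sum_congr rfl fun y _ => ?_
  simp [Finset.mul_sum]

lemma rcov_mono {v w : Finset X × Finset Y → ℝ} (h : ∀ R, v R ≤ w R) (x : X) (y : Y) :
    rcov v x y ≤ rcov w x y := by
  refine Finset.sum_le_sum fun R _ => ?_
  split_ifs <;> simp [h]

lemma rcov_nonneg {w : Finset X × Finset Y → ℝ} (h : ∀ R, 0 ≤ w R) (x : X) (y : Y) :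
    0 ≤ rcov w x y := by
  refine Finset.sum_nonneg fun R _ => ?_
  split_ifs <;> simp [h]

lemma rcov_le_sum {w : Finset X × Finset Y → ℝ} (h : ∀ R, 0 ≤ w R) (x : X) (y : Y) :
    rcov w x y ≤ ∑ R, w R := by
  refine Finset.sum_le_sum fun R _ => ?_
  split_ifs <;> simp [h]

lemma rcov_add (v w : Finset X × Finset Y → ℝ) (x : X) (y : Y) :
    rcov (fun R => v R + w R) x y = rcov v x y + rcov w x y := by
  unfold rcov
  rw [← Finset.sum_add_distrib]
  refine Finset.sum_congr rfl fun R _ => ?_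
  split_ifs <;> simp

end RectangleSums

section RectangleRecursion

variable {X Y : Type} {μA : X → ℝ} {μB : Y → ℝ} {f : X → Y → Bool} {A : Finset X} {B : Finset Y}

lemma rectMass_nonneg (hA : ∀ x, 0 ≤ μA x) (hB : ∀ y, 0 ≤ μB y) :
    0 ≤ rectMass μA μB A B :=
  rectSum_nonneg fun x y => mul_nonneg (hA x) (hB y)

lemma rectMassZ_nonneg (hA : ∀ x, 0 ≤ μA x) (hB : ∀ y, 0 ≤ μB y) (z : Bool) :
    0 ≤ rectMassZ μA μB f z A B := by
  refine rectSum_nonneg fun x y => ?_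
  have := mul_nonneg (hA x) (hB y)
  split_ifs <;> simp [this]

lemma rectMassZ_le_rectMass (hA : ∀ x, 0 ≤ μA x) (hB : ∀ y, 0 ≤ μB y) (z : Bool) :
    rectMassZ μA μB f z A B ≤ rectMass μA μB A B := by
  refine rectSum_mono fun x _ y _ => ?_
  have := mul_nonneg (hA x) (hB y)
  split_ifs <;> simp [this]

lemma rectErr_le_rectMass (hA : ∀ x, 0 ≤ μA x) (hB : ∀ y, 0 ≤ μB y) (P : Protocol X Y) :
    rectErr μA μB f P A B ≤ rectMass μA μB A B := by
  refine rectSum_mono fun x _ y _ => ?_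
  have := mul_nonneg (hA x) (hB y)
  split_ifs <;> simp [this]

lemma rectErr_leaf (z : Bool) :
    rectErr μA μB f (.leaf z) A B = rectMassZ μA μB f (!z) A B := by
  refine rectSum_congr fun x _ y _ => ?_
  cases h : f x y <;> cases z <;> simp [Protocol.eval]

lemma rectErr_nodeA {S : Finset X} (hS : S ⊆ A) (P Q : Protocol X Y) :
    rectErr μA μB f (.nodeA (fun x => decide (x ∈ S)) P Q) A B =
      rectErr μA μB f Q S B + rectErr μA μB f P (A \ S) B := by
  unfold rectErr
  rw [rectSum_sdiff_left _ _ hS]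
  congr 1
  · exact rectSum_congr fun x hx y _ => by simp [Protocol.eval, hx]
  · exact rectSum_congr fun x hx y _ => by simp [Protocol.eval, (Finset.mem_sdiff.1 hx).2]

lemma rectErr_nodeB {T : Finset Y} (hT : T ⊆ B) (P Q : Protocol X Y) :
    rectErr μA μB f (.nodeB (fun y => decide (y ∈ T)) P Q) A B =
      rectErr μA μB f Q A T + rectErr μA μB f P A (B \ T) := by
  unfold rectErr
  rw [rectSum_sdiff_right _ _ hT]
  congr 1
  · exact rectSum_congr fun x _ y hy => by simp [Protocol.eval, hy]
  · exact rectSum_congr fun x _ y hy => by simp [Protocol.eval, (Finset.mem_sdiff.1 hy).2]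

variable [Fintype X] [Fintype Y]

lemma deficit_nonneg (hA : ∀ x, 0 ≤ μA x) (hB : ∀ y, 0 ≤ μB y) (z : Bool)
    {w : Finset X × Finset Y → ℝ} (hw : ∀ x y, rcov w x y ≤ 1) :
    0 ≤ deficit μA μB f z w A B := by
  refine rectSum_nonneg fun x y => ?_
  have := mul_nonneg (mul_nonneg (hA x) (hB y)) (sub_nonneg.2 (hw x y))
  split_ifs <;> simp [this]

lemma deficit_add_sum (z : Bool) (w : Finset X × Finset Y → ℝ) :
    deficit μA μB f z w A B +
      ∑ R, w R * rectMassZ μA μB f z (A ∩ R.1) (B ∩ R.2) = rectMassZ μA μB f z A B := by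
  unfold deficit rectMassZ
  rw [← rectSum_mul_rcov, ← rectSum_add]
  refine rectSum_congr fun x _ y _ => ?_
  split_ifs <;> ring

lemma deficit_le_add_of_eq_add (hA : ∀ x, 0 ≤ μA x) (hB : ∀ y, 0 ≤ μB y) (z : Bool)
    {v u w : Finset X × Finset Y → ℝ} (hu : ∀ R, 0 ≤ u R) (hw : ∀ R, w R = v R + u R) :
    deficit μA μB f z v A B ≤ deficit μA μB f z w A B +
      ∑ R, u R * rectMass μA μB (A ∩ R.1) (B ∩ R.2) := by
  unfold deficit rectMass
  rw [← rectSum_mul_rcov, ← rectSum_add]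
  refine rectSum_mono fun x _ y _ => ?_
  have h1 : rcov w x y = rcov v x y + rcov u x y := by
    rw [← rcov_add]; exact congrArg (fun w => rcov w x y) (funext hw)
  have h2 := mul_nonneg (mul_nonneg (hA x) (hB y)) (rcov_nonneg hu x y)
  split_ifs
  · rw [h1]; linarith
  · linarith

/-- A weighting that covers the `1`-inputs of `A × B` well contains a large rectangle in which
the `0`-inputs have small relative mass. -/
lemma exists_biased_rect (hA : ∀ x, 0 ≤ μA x) (hB : ∀ y, 0 ≤ μB y)
    {w : Finset X × Finset Y → ℝ} (hw : ∀ R, 0 ≤ w R) {W δ : ℝ} (hW : 0 < W)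
    (hwW : ∑ R, w R ≤ W) (hδ : 0 < δ) (hwδ : ∀ x y, f x y = false → rcov w x y ≤ δ)
    (hlarge : 1 / 4 * rectMass μA μB A B < rectMassZ μA μB f true A B)
    (hdef : 2 * deficit μA μB f true w A B < rectMassZ μA μB f true A B) :
    ∃ R : Finset X × Finset Y,
      rectMass μA μB A B ≤ 16 * W * rectMassZ μA μB f true (A ∩ R.1) (B ∩ R.2) ∧
      rectMassZ μA μB f false (A ∩ R.1) (B ∩ R.2) ≤
        16 * δ * rectMassZ μA μB f true (A ∩ R.1) (B ∩ R.2) ∧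
      0 < rectMassZ μA μB f true (A ∩ R.1) (B ∩ R.2) := by
  set M := rectMass μA μB A B
  set M₁ := rectMassZ μA μB f true A B
  have hM : 0 ≤ M := rectMass_nonneg hA hB
  have hM₁ : 0 < M₁ := by linarith
  have h1 := deficit_add_sum (μA := μA) (μB := μB) (f := f) (A := A) (B := B) true w
  have h0 : ∑ R, w R * rectMassZ μA μB f false (A ∩ R.1) (B ∩ R.2) ≤ δ * M := by
    unfold rectMassZ M rectMass
    rw [← rectSum_mul_rcov, ← rectSum_const_mul]
    refine rectSum_mono fun x _ y _ => ?_
    have hxy := mul_nonneg (hA x) (hB y)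
    split_ifs with h
    · rw [mul_comm]
      exact mul_le_mul_of_nonneg_right (hwδ x y h) hxy
    · rw [zero_mul]; positivity
  have hsum : 0 < ∑ R : Finset X × Finset Y, w R *
      (rectMassZ μA μB f true (A ∩ R.1) (B ∩ R.2) - M₁ / (4 * W) -
        (1 / (16 * δ)) * rectMassZ μA μB f false (A ∩ R.1) (B ∩ R.2)) := by
    have e : ∑ R : Finset X × Finset Y, w R *
      (rectMassZ μA μB f true (A ∩ R.1) (B ∩ R.2) - M₁ / (4 * W) -
        (1 / (16 * δ)) * rectMassZ μA μB f false (A ∩ R.1) (B ∩ R.2)) =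
        ∑ R, w R * rectMassZ μA μB f true (A ∩ R.1) (B ∩ R.2) -
        (∑ R, w R) * (M₁ / (4 * W)) - (1 / (16 * δ)) *
        ∑ R, w R * rectMassZ μA μB f false (A ∩ R.1) (B ∩ R.2) := by
      rw [Finset.sum_mul, Finset.mul_sum, ← Finset.sum_sub_distrib, ← Finset.sum_sub_distrib]
      exact Finset.sum_congr rfl fun R _ => by ring
    rw [e]
    have e1 : (∑ R, w R) * (M₁ / (4 * W)) ≤ M₁ / 4 := by
      calc (∑ R, w R) * (M₁ / (4 * W)) ≤ W * (M₁ / (4 * W)) := by gcongr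
        _ = M₁ / 4 := by field_simp
    have e2 : (1 / (16 * δ)) * ∑ R, w R * rectMassZ μA μB f false (A ∩ R.1) (B ∩ R.2) ≤
        M / 16 := by
      calc _ ≤ (1 / (16 * δ)) * (δ * M) := by gcongr
        _ = M / 16 := by field_simp
    linarith
  obtain ⟨R, -, hR⟩ : ∃ R ∈ (Finset.univ : Finset (Finset X × Finset Y)), 0 < w R *
      (rectMassZ μA μB f true (A ∩ R.1) (B ∩ R.2) - M₁ / (4 * W) -
        (1 / (16 * δ)) * rectMassZ μA μB f false (A ∩ R.1) (B ∩ R.2)) := by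
    by_contra! h
    exact absurd hsum (not_lt.2 (Finset.sum_nonpos h))
  have hpos := pos_of_mul_pos_right hR (hw R)
  have hZ0 : 0 ≤ rectMassZ μA μB f false (A ∩ R.1) (B ∩ R.2) := rectMassZ_nonneg hA hB _
  have hq : 0 < M₁ / (4 * W) := by positivity
  set Z₁ := rectMassZ μA μB f true (A ∩ R.1) (B ∩ R.2)
  set Z₀ := rectMassZ μA μB f false (A ∩ R.1) (B ∩ R.2)
  have hq0 : 0 ≤ 1 / (16 * δ) * Z₀ := by positivity
  refine ⟨R, ?_, ?_, by linarith⟩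
  · have : M₁ / (4 * W) ≤ Z₁ := by linarith
    rw [div_le_iff₀ (by positivity)] at this
    nlinarith
  · have : 1 / (16 * δ) * Z₀ ≤ Z₁ := by linarith
    rw [one_div, inv_mul_le_iff₀ (by positivity)] at this
    exact this

/-- If a subrectangle `S × T` of `A × B` is nearly disjoint from the `0`-inputs, then half of the
weight of a covering of the `0`-inputs is redundant on `S × B` or on `A × T`. -/
lemma exists_halved_weight (hA : ∀ x, 0 ≤ μA x) (hB : ∀ y, 0 ≤ μB y)
    {v : Finset X × Finset Y → ℝ} (hv : ∀ R, 0 ≤ v R) (hv1 : ∀ x y, rcov v x y ≤ 1)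
    {δ κ : ℝ} (hvδ : ∀ x y, f x y = true → rcov v x y ≤ δ) (hδ : 0 ≤ δ)
    (hκ : 0 < κ) (hκδ : κ ^ 2 = 17 * δ) {S : Finset X} {T : Finset Y}
    (hT : T ⊆ B)
    (hbias : rectMassZ μA μB f false S T ≤ 16 * δ * rectMassZ μA μB f true S T)
    (hpos : 0 < rectMass μA μB S T) :
    ∃ v' : Finset X × Finset Y → ℝ, (∀ R, 0 ≤ v' R) ∧ (∀ R, v' R ≤ v R) ∧
      ∑ R, v' R ≤ (∑ R, v R) / 2 ∧
      (deficit μA μB f false v' S B ≤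
          deficit μA μB f false v S B + κ * rectMass μA μB S B ∨
        deficit μA μB f false v' A T ≤
          deficit μA μB f false v A T + κ * rectMass μA μB A T) := by
  have hmass : ∑ R, v R * rectMass μA μB (S ∩ R.1) (T ∩ R.2) ≤
      κ ^ 2 * rectMass μA μB S T := by
    have h : ∑ R, v R * rectMass μA μB (S ∩ R.1) (T ∩ R.2) ≤
        δ * rectMassZ μA μB f true S T + rectMassZ μA μB f false S T := by
      unfold rectMass rectMassZ
      rw [← rectSum_mul_rcov, ← rectSum_const_mul, ← rectSum_add]
      refine rectSum_mono fun x _ y _ => ?_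
      have hxy := mul_nonneg (hA x) (hB y)
      cases h : f x y
      · simpa using mul_le_mul_of_nonneg_left (hv1 x y) hxy
      · simpa [mul_comm δ] using mul_le_mul_of_nonneg_left (hvδ x y h) hxy
    have h1 := rectMassZ_le_rectMass (f := f) (A := S) (B := T) hA hB true
    rw [hκδ]
    nlinarith
  have hcov : ∑ R, v R * rectMass μA μB (A ∩ R.1) (B ∩ R.2) ≤ rectMass μA μB A B := by
    unfold rectMass
    rw [← rectSum_mul_rcov]
    exact rectSum_mono fun x _ y _ =>
      mul_le_of_le_one_right (mul_nonneg (hA x) (hB y)) (hv1 x y)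
  have hsA : ∀ C : Finset X, 0 ≤ ∑ x ∈ C, μA x := fun C => Finset.sum_nonneg fun x _ => hA x
  have hsB : ∀ C : Finset Y, 0 ≤ ∑ y ∈ C, μB y := fun C => Finset.sum_nonneg fun y _ => hB y
  have hb : 0 < ∑ y ∈ T, μB y := by
    rw [rectMass_eq_mul] at hpos
    exact pos_of_mul_pos_right hpos (hsA S)
  have hb' : 0 < ∑ y ∈ B, μB y :=
    hb.trans_le (Finset.sum_le_sum_of_subset_of_nonneg hT fun y _ _ => hB y)
  simp only [rectMass_eq_mul] at hmass hcov hpos ⊢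
  set b := ∑ y ∈ T, μB y
  set b' := ∑ y ∈ B, μB y
  set heavy : Finset X × Finset Y → Prop := fun R =>
    κ * (∑ y ∈ B ∩ R.2, μB y) * b < (∑ y ∈ T ∩ R.2, μB y) * b'
  set p : Finset X × Finset Y → ℝ := fun R => if heavy R then v R else 0
  set q : Finset X × Finset Y → ℝ := fun R => if heavy R then 0 else v R
  have hp : ∀ R, 0 ≤ p R := fun R => by simp only [p]; split_ifs <;> simp [hv]
  have hq : ∀ R, 0 ≤ q R := fun R => by simp only [q]; split_ifs <;> simp [hv]
  have hpq : ∀ R, v R = p R + q R := fun R => by simp only [p, q]; split_ifs <;> simp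
  have hsum : ∑ R, v R = ∑ R, p R + ∑ R, q R := by
    rw [← Finset.sum_add_distrib]
    exact Finset.sum_congr rfl fun R _ => hpq R
  rcases le_total (∑ R, q R) (∑ R, p R) with hle | hle
  · refine ⟨q, hq, fun R => by linarith [hpq R, hp R], by linarith, Or.inl ?_⟩
    refine (deficit_le_add_of_eq_add (w := v) hA hB false hp
      fun R => by rw [hpq R, add_comm]).trans ?_
    refine add_le_add_right ?_ _
    simp only [rectMass_eq_mul]
    have key : ∀ R, p R * ((∑ x ∈ S ∩ R.1, μA x) * ∑ y ∈ B ∩ R.2, μB y) ≤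
        b' / (κ * b) * (v R * ((∑ x ∈ S ∩ R.1, μA x) * ∑ y ∈ T ∩ R.2, μB y)) := by
      intro R
      by_cases hR : heavy R
      · simp only [p, if_pos hR]
        have h1 : ∑ y ∈ B ∩ R.2, μB y ≤ b' / (κ * b) * ∑ y ∈ T ∩ R.2, μB y := by
          rw [div_mul_eq_mul_div, le_div_iff₀ (by positivity)]
          have : κ * (∑ y ∈ B ∩ R.2, μB y) * b < (∑ y ∈ T ∩ R.2, μB y) * b' := hR
          linarith
        have h2 := mul_le_mul_of_nonneg_left h1 (mul_nonneg (hv R) (hsA (S ∩ R.1)))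
        linarith
      · simp only [p, if_neg hR, zero_mul]
        have := hv R
        have := hsA (S ∩ R.1)
        have := hsB (T ∩ R.2)
        positivity
    calc _ ≤ ∑ R, b' / (κ * b) *
          (v R * ((∑ x ∈ S ∩ R.1, μA x) * ∑ y ∈ T ∩ R.2, μB y)) :=
          Finset.sum_le_sum fun R _ => key R
      _ ≤ b' / (κ * b) * (κ ^ 2 * ((∑ x ∈ S, μA x) * b)) := by
          rw [← Finset.mul_sum]
          gcongr
      _ = κ * ((∑ x ∈ S, μA x) * b') := by field_simp
  · refine ⟨p, hp, fun R => by linarith [hpq R, hq R], by linarith, Or.inr ?_⟩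
    refine (deficit_le_add_of_eq_add hA hB false hq hpq).trans ?_
    refine add_le_add_right ?_ _
    simp only [rectMass_eq_mul]
    have key : ∀ R, q R * ((∑ x ∈ A ∩ R.1, μA x) * ∑ y ∈ T ∩ R.2, μB y) ≤
        κ * b / b' * (v R * ((∑ x ∈ A ∩ R.1, μA x) * ∑ y ∈ B ∩ R.2, μB y)) := by
      intro R
      by_cases hR : heavy R
      · simp only [q, if_pos hR, zero_mul]
        have := hv R
        have := hsA (A ∩ R.1)
        have := hsB (B ∩ R.2)
        positivity
      · simp only [q, if_neg hR]
        have h1 : ∑ y ∈ T ∩ R.2, μB y ≤ κ * b / b' * ∑ y ∈ B ∩ R.2, μB y := by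
          rw [div_mul_eq_mul_div, le_div_iff₀ (by positivity)]
          have : (∑ y ∈ T ∩ R.2, μB y) * b' ≤ κ * (∑ y ∈ B ∩ R.2, μB y) * b := not_lt.1 hR
          linarith
        have h2 := mul_le_mul_of_nonneg_left h1 (mul_nonneg (hv R) (hsA (A ∩ R.1)))
        linarith
    calc _ ≤ ∑ R, κ * b / b' *
          (v R * ((∑ x ∈ A ∩ R.1, μA x) * ∑ y ∈ B ∩ R.2, μB y)) :=
          Finset.sum_le_sum fun R _ => key R
      _ ≤ κ * b / b' * ((∑ x ∈ A, μA x) * b') := by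
          rw [← Finset.mul_sum]
          gcongr
      _ = κ * ((∑ x ∈ A, μA x) * b) := by field_simp

/-- The recursive protocol: each of at most `m` halvings of the weight `v` is found after at most
`k` splits that keep `v` but shrink the current rectangle by a constant factor. -/
lemma exists_protocol_rectErr_le (hA : ∀ x, 0 ≤ μA x) (hB : ∀ y, 0 ≤ μB y)
    {w : Finset X × Finset Y → ℝ} (hw : ∀ R, 0 ≤ w R) {W δ κ η : ℝ} (hW : 1 ≤ W)
    (hwW : ∑ R, w R ≤ W) (hδ : 0 < δ) (hw1 : ∀ x y, rcov w x y ≤ 1)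
    (hwδ : ∀ x y, f x y = false → rcov w x y ≤ δ) (hκ : 0 < κ) (hκδ : κ ^ 2 = 17 * δ)
    (k : ℕ) (hη : (1 - 1 / (16 * W)) ^ k ≤ η) (m j : ℕ) (A : Finset X) (B : Finset Y)
    (v : Finset X × Finset Y → ℝ) (hv : ∀ R, 0 ≤ v R) (hv1 : ∀ x y, rcov v x y ≤ 1)
    (hvδ : ∀ x y, f x y = true → rcov v x y ≤ δ) (hvm : ∑ R, v R ≤ 2 ^ m / 2) :
    ∃ P : Protocol X Y, P.leavesCount ≤ (j + 1) * (k + 1) ^ m ∧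
      rectErr μA μB f P A B ≤
        2 * deficit μA μB f true w A B + 2 * deficit μA μB f false v A B +
        (1 / 4 + m * (2 * κ + η) + (1 - 1 / (16 * W)) ^ j) * rectMass μA μB A B := by
  have hθ0 : 0 ≤ 1 - 1 / (16 * W) := by
    rw [sub_nonneg, div_le_one (by positivity)]; linarith
  have hη0 : 0 ≤ η := (pow_nonneg hθ0 k).trans hη
  set θ := 1 - 1 / (16 * W) with hθ
  induction m generalizing j A B v with
  | zero =>
    refine ⟨.leaf true, by simp [Protocol.leavesCount], ?_⟩
    have h1 : rectErr μA μB f (.leaf true) A B ≤ 2 * deficit μA μB f false v A B := by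
      rw [rectErr_leaf]
      unfold deficit rectMassZ
      rw [← rectSum_const_mul]
      refine rectSum_mono fun x _ y _ => ?_
      have hxy := mul_nonneg (hA x) (hB y)
      have hc : rcov v x y ≤ 1 / 2 := (rcov_le_sum hv x y).trans (by simpa using hvm)
      cases f x y
      · simp only [Bool.not_true, if_true]; nlinarith
      · simp
    have h2 : 0 ≤ deficit μA μB f true w A B := deficit_nonneg hA hB _ hw1
    have h3 : 0 ≤ rectMass μA μB A B := rectMass_nonneg hA hB
    have h4 : 0 ≤ (1 / 4 + ((0 : ℕ) : ℝ) * (2 * κ + η) + θ ^ j) * rectMass μA μB A B := by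
      positivity
    linarith
  | succ m ihm =>
    induction j generalizing A B with
    | zero =>
      refine ⟨.leaf true, by simp [Protocol.leavesCount, Nat.one_le_pow], ?_⟩
      have h1 := rectErr_le_rectMass (f := f) (A := A) (B := B) hA hB (.leaf true)
      have h2 : 0 ≤ deficit μA μB f true w A B := deficit_nonneg hA hB _ hw1
      have h3 : 0 ≤ deficit μA μB f false v A B := deficit_nonneg hA hB _ hv1
      have h4 : 0 ≤ rectMass μA μB A B := rectMass_nonneg hA hB
      have h5 : 0 ≤ (1 / 4 + ((m + 1 : ℕ) : ℝ) * (2 * κ + η)) * rectMass μA μB A B := by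
        positivity
      rw [pow_zero]
      linarith
    | succ j ihj =>
      have hM : 0 ≤ rectMass μA μB A B := rectMass_nonneg hA hB
      have hd1 : 0 ≤ deficit μA μB f true w A B := deficit_nonneg hA hB _ hw1
      have hd0 : 0 ≤ deficit μA μB f false v A B := deficit_nonneg hA hB _ hv1
      by_cases hlarge : rectMassZ μA μB f true A B ≤ 1 / 4 * rectMass μA μB A B ∨
          rectMassZ μA μB f true A B ≤ 2 * deficit μA μB f true w A B
      · refine ⟨.leaf false, ?_, ?_⟩
        · simp only [Protocol.leavesCount]
          exact Nat.one_le_iff_ne_zero.2 (by positivity)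
        · rw [rectErr_leaf, Bool.not_false]
          have h5 : 0 ≤ (((m + 1 : ℕ) : ℝ) * (2 * κ + η) + θ ^ (j + 1)) *
              rectMass μA μB A B := by positivity
          rcases hlarge with h | h <;> linarith
      push Not at hlarge
      obtain ⟨R, hR1, hR2, hR3⟩ := exists_biased_rect hA hB hw (by linarith) hwW hδ hwδ
        hlarge.1 hlarge.2
      set S := A ∩ R.1
      set T := B ∩ R.2
      have hS : S ⊆ A := Finset.inter_subset_left
      have hT : T ⊆ B := Finset.inter_subset_left
      have hZ := rectMassZ_le_rectMass (f := f) (A := S) (B := T) hA hB true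
      obtain ⟨v', hv'0, hv'v, hv's, hv'⟩ := exists_halved_weight hA hB hv hv1 hvδ hδ.le hκ
        hκδ hT hR2 (hR3.trans_le hZ)
      have hv'1 : ∀ x y, rcov v' x y ≤ 1 := fun x y => (rcov_mono hv'v x y).trans (hv1 x y)
      have hv'δ : ∀ x y, f x y = true → rcov v' x y ≤ δ :=
        fun x y h => (rcov_mono hv'v x y).trans (hvδ x y h)
      have hv'm : ∑ R, v' R ≤ 2 ^ m / 2 := by
        rw [pow_succ] at hvm; linarith
      have hleaf : (k + 1) * (k + 1) ^ m + (j + 1) * (k + 1) ^ (m + 1) =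
          (j + 1 + 1) * (k + 1) ^ (m + 1) := by ring
      have hshrink : ∀ M₁ M₂ : ℝ, rectMass μA μB S T ≤ M₁ →
          rectMass μA μB A B = M₁ + M₂ → M₂ ≤ θ * rectMass μA μB A B := by
        intro M₁ M₂ h1 h2
        have h3 : 1 / (16 * W) * rectMass μA μB A B ≤ M₁ := by
          rw [one_div, inv_mul_le_iff₀ (by positivity)]
          exact hR1.trans (mul_le_mul_of_nonneg_left (hZ.trans h1) (by positivity))
        rw [hθ]; linarith
      have hfinal : ∀ e₁ e₂ d₁ d₂ c₁ c₂ c' M₁ M₂ : ℝ, 0 ≤ M₁ → 0 ≤ M₂ →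
          rectMass μA μB S T ≤ M₁ → rectMass μA μB A B = M₁ + M₂ →
          deficit μA μB f true w A B = d₁ + d₂ → deficit μA μB f false v A B = c₁ + c₂ →
          c' ≤ c₁ + κ * M₁ →
          e₁ ≤ 2 * d₁ + 2 * c' + (1 / 4 + m * (2 * κ + η) + θ ^ k) * M₁ →
          e₂ ≤ 2 * d₂ + 2 * c₂ + (1 / 4 + (m + 1 : ℕ) * (2 * κ + η) + θ ^ j) * M₂ →
          e₁ + e₂ ≤ 2 * deficit μA μB f true w A B + 2 * deficit μA μB f false v A B +
            (1 / 4 + (m + 1 : ℕ) * (2 * κ + η) + θ ^ (j + 1)) * rectMass μA μB A B := by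
        intro e₁ e₂ d₁ d₂ c₁ c₂ c' M₁ M₂ hM₁ hM₂ hST hMs hds hcs hc' he₁ he₂
        have h1 := mul_le_mul_of_nonneg_left (hshrink M₁ M₂ hST hMs) (pow_nonneg hθ0 j)
        have h2 := mul_le_mul_of_nonneg_right hη hM₁
        rw [hds, hcs, pow_succ]
        push_cast at he₂ ⊢
        have h3 : (1 / 4 + (m + 1 : ℝ) * (2 * κ + η) + θ ^ j * θ) * rectMass μA μB A B =
          (1 / 4 + (m + 1 : ℝ) * (2 * κ + η)) * (M₁ + M₂) +
            θ ^ j * (θ * rectMass μA μB A B) := by rw [hMs]; ring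
        rw [h3]
        linarith
      rcases hv' with hv' | hv'
      · obtain ⟨P₁, hP₁, hE₁⟩ := ihm k S B v' hv'0 hv'1 hv'δ hv'm
        obtain ⟨P₂, hP₂, hE₂⟩ := ihj (A \ S) B
        refine ⟨.nodeA (fun x => decide (x ∈ S)) P₂ P₁, ?_, ?_⟩
        · simp only [Protocol.leavesCount]; omega
        · rw [rectErr_nodeA hS]
          refine hfinal _ _ _ _ _ _ _ _ _ (rectMass_nonneg hA hB) (rectMass_nonneg hA hB) ?_
            (rectSum_sdiff_left _ _ hS) (rectSum_sdiff_left _ _ hS)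
            (rectSum_sdiff_left _ _ hS) hv' hE₁ hE₂
          have h : rectMass μA μB S B = _ := rectSum_sdiff_right _ _ hT
          have h' : 0 ≤ rectMass μA μB S (B \ T) := rectMass_nonneg hA hB
          rw [h]
          exact le_add_of_nonneg_right h'
      · obtain ⟨P₁, hP₁, hE₁⟩ := ihm k A T v' hv'0 hv'1 hv'δ hv'm
        obtain ⟨P₂, hP₂, hE₂⟩ := ihj A (B \ T)
        refine ⟨.nodeB (fun y => decide (y ∈ T)) P₂ P₁, ?_, ?_⟩
        · simp only [Protocol.leavesCount]; omega
        · rw [rectErr_nodeB hT]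
          refine hfinal _ _ _ _ _ _ _ _ _ (rectMass_nonneg hA hB) (rectMass_nonneg hA hB) ?_
            (rectSum_sdiff_right _ _ hT) (rectSum_sdiff_right _ _ hT)
            (rectSum_sdiff_right _ _ hT) hv' hE₁ hE₂
          have h : rectMass μA μB A T = _ := rectSum_sdiff_left _ _ hS
          have h' : 0 ≤ rectMass μA μB (A \ S) T := rectMass_nonneg hA hB
          rw [h]
          exact le_add_of_nonneg_right h'

end RectangleRecursion

section Extraction

variable {X Y : Type} [Fintype X] [Fintype Y] {μA : X → ℝ} {μB : Y → ℝ} {f : X → Y → Bool}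

lemma commErr_eq_rectErr (P : Protocol X Y) :
    commErr (fun x y => μA x * μB y) f P =
      rectErr μA μB f P Finset.univ Finset.univ := rfl

lemma rectMass_univ (hA : IsDist μA) (hB : IsDist μB) :
    rectMass μA μB Finset.univ Finset.univ = 1 := by
  rw [rectMass_eq_mul, hA.2, hB.2, one_mul]

lemma CCdist_le {μ : X → Y → ℝ} {ε : ℝ} {d : ℕ} (P : Protocol X Y) (hd : P.depth ≤ d)
    (hε : commErr μ f P ≤ ε) : CCdist μ f ε ≤ d :=
  Nat.sInf_le ⟨P, hd, hε⟩

/-- The weighting of the singleton rectangles with `f`-value `z` covers exactly these inputs. -/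
lemma exists_rcov_eq_ite (f : X → Y → Bool) (z : Bool) :
    ∃ w : Finset X × Finset Y → ℝ, (∀ R, 0 ≤ w R) ∧
      ∀ x y, rcov w x y = if f x y = z then 1 else 0 := by
  refine ⟨fun R => if ∃ x y, R = ({x}, {y}) ∧ f x y = z then 1 else 0, fun R => ?_,
    fun x y => ?_⟩
  · dsimp only
    split_ifs <;> norm_num
  · unfold rcov
    rw [Finset.sum_eq_single ({x}, {y})]
    · simp
    · rintro R - hR
      rw [ite_eq_right_iff]
      rintro ⟨hx, hy⟩
      refine if_neg ?_
      rintro ⟨x', y', rfl, -⟩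
      obtain rfl := Finset.mem_singleton.1 hx
      obtain rfl := Finset.mem_singleton.1 hy
      exact hR rfl
    · simp

/-- A nearly optimal solution of the linear program defining the smooth rectangle bound. -/
lemma exists_weight_of_srecZmu_lt (hA : IsDist μA) (hB : IsDist μB) (z : Bool)
    {ε δ V : ℝ} (hε : 0 ≤ ε) (hδ : 0 ≤ δ)
    (hV : srecZmu (fun x y => μA x * μB y) f z ε δ < V) :
    ∃ w : Finset X × Finset Y → ℝ, (∀ R, 0 ≤ w R) ∧ (∀ x y, rcov w x y ≤ 1) ∧
      (∀ x y, f x y ≠ z → rcov w x y ≤ δ) ∧ ∑ R, w R ≤ V ∧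
      deficit μA μB f z w Finset.univ Finset.univ ≤ ε := by
  have htot : totalZ (fun x y => μA x * μB y) f z =
      rectMassZ μA μB f z Finset.univ Finset.univ := rfl
  have ht0 : 0 ≤ totalZ (fun x y => μA x * μB y) f z := by
    rw [htot]; exact rectMassZ_nonneg hA.1 hB.1 z
  have ht1 : totalZ (fun x y => μA x * μB y) f z ≤ 1 := by
    rw [htot, ← rectMass_univ hA hB]; exact rectMassZ_le_rectMass hA.1 hB.1 z
  obtain ⟨_, ⟨w, hw0, hwc, hwδ, hw1, rfl⟩, hwV⟩ := exists_lt_of_csInf_lt (by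
    obtain ⟨w, hw0, hw⟩ := exists_rcov_eq_ite f z
    refine ⟨_, w, hw0, ?_, ?_, ?_, rfl⟩
    · have : (∑ x, ∑ y, if f x y = z then μA x * μB y * rcov w x y else 0) =
          totalZ (fun x y => μA x * μB y) f z := by
        refine Finset.sum_congr rfl fun x _ => Finset.sum_congr rfl fun y _ => ?_
        rw [hw]
        split_ifs <;> simp
      rw [this]
      nlinarith
    · intro x y h
      rw [hw, if_neg h]; exact hδ
    · intro x y
      rw [hw]; split_ifs <;> norm_num) hV
  refine ⟨w, hw0, hw1, hwδ, hwV.le, ?_⟩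
  have h : deficit μA μB f z w Finset.univ Finset.univ +
      (∑ x, ∑ y, if f x y = z then μA x * μB y * rcov w x y else 0) =
      totalZ (fun x y => μA x * μB y) f z := by
    refine (rectSum_add _ _ _ _).symm.trans (rectSum_congr fun x _ y _ => ?_)
    split_ifs <;> ring
  nlinarith

end Extraction

section Parameters

lemma exists_protocol_depth_of_leavesCount {X Y : Type} (P : Protocol X Y) {L : ℝ} (hL : 0 ≤ L)
    (hP : (P.leavesCount : ℝ) ≤ 2 ^ L) :
    ∃ P' : Protocol X Y, (P'.depth : ℝ) ≤ 13 + 6 * L ∧ ∀ x y, P'.eval x y = P.eval x y := by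
  have h1 : P.leavesCount ≤ 2 ^ ⌈L⌉₊ := by
    have : (2 : ℝ) ^ L ≤ 2 ^ (⌈L⌉₊ : ℝ) :=
      Real.rpow_le_rpow_of_exponent_le (by norm_num) (Nat.le_ceil L)
    rw [Real.rpow_natCast] at this
    exact_mod_cast hP.trans this
  obtain ⟨P', hd, he⟩ := P.exists_balanced (3 * ⌈L⌉₊) (by
    rw [pow_mul, pow_mul]
    calc P.leavesCount * (3 ^ 3) ^ ⌈L⌉₊ ≤ 2 ^ ⌈L⌉₊ * (3 ^ 3) ^ ⌈L⌉₊ := by gcongr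
      _ = (2 * 3 ^ 3) ^ ⌈L⌉₊ := (mul_pow _ _ _).symm
      _ ≤ (4 ^ 3) ^ ⌈L⌉₊ := Nat.pow_le_pow_left (by norm_num) _
      _ ≤ 8 * (4 ^ 3) ^ ⌈L⌉₊ := by omega)
  refine ⟨P', ?_, he⟩
  have h2 : (P'.depth : ℝ) ≤ 7 + 2 * (3 * ⌈L⌉₊) := by exact_mod_cast hd
  have h3 := Nat.ceil_lt_add_one hL
  linarith

lemma one_sub_inv_pow_le {W n : ℝ} (hW : 1 ≤ W) (hn : 0 < n) {k : ℕ} (hk : 16 * W * n ≤ k) :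
    (1 - 1 / (16 * W)) ^ k ≤ 1 / n := by
  have h0 : 0 ≤ 1 - 1 / (16 * W) := by
    rw [sub_nonneg, div_le_one (by positivity)]; linarith
  have h1 : 1 - 1 / (16 * W) ≤ Real.exp (-(1 / (16 * W))) := Real.one_sub_le_exp_neg _
  calc (1 - 1 / (16 * W)) ^ k ≤ Real.exp (-(1 / (16 * W))) ^ k := by gcongr
    _ = Real.exp (-(k / (16 * W))) := by rw [← Real.exp_nat_mul]; congr 1; ring
    _ ≤ Real.exp (-n) := by
        gcongr
        rw [le_div_iff₀ (by positivity)]; linarith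
    _ ≤ 1 / n := by
        rw [Real.exp_neg, one_div]
        gcongr
        linarith [Real.add_one_le_exp n]

end Parameters

/-- **Theorem 2.2, part 1.** There is a universal constant `C > 0` such that for every
`n ≥ 2`, every `f : {0,1}ⁿ × {0,1}ⁿ → {0,1}` and every product distribution `μ`
(with `srec^μ_{1/n²,1/n²}(f) ≥ 2`),
`CC^μ_{0.49}(f) ≤ C · (log srec^μ_{1/n²,1/n²}(f))² · log n`. -/
theorem cc_le_log_srecMu_sq :
    ∃ C : ℝ, 0 < C ∧
      ∀ (n : ℕ) (f : (Fin n → Bool) → (Fin n → Bool) → Bool)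
        (μA μB : (Fin n → Bool) → ℝ), IsDist μA → IsDist μB →
        2 ≤ n →
        2 ≤ srecMu (fun x y => μA x * μB y) f (1 / (n : ℝ) ^ 2) (1 / (n : ℝ) ^ 2) →
        (CCdist (fun x y => μA x * μB y) f 0.49 : ℝ) ≤
          C * (Real.logb 2
              (srecMu (fun x y => μA x * μB y) f (1 / (n : ℝ) ^ 2) (1 / (n : ℝ) ^ 2))) ^ 2 *
            Real.logb 2 n := by
  refine ⟨3000, by norm_num, fun n f μA μB hA hB hn hK => ?_⟩
  set K := srecMu (fun x y => μA x * μB y) f (1 / (n : ℝ) ^ 2) (1 / (n : ℝ) ^ 2) with hKdef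
  set D := Real.logb 2 K with hD
  set ℓ := Real.logb 2 (n : ℝ) with hℓ
  have hn2 : (2 : ℝ) ≤ n := by exact_mod_cast hn
  have hn0 : (0 : ℝ) < n := by linarith
  have hK0 : 0 < K := by linarith
  have hD1 : 1 ≤ D := by
    rw [hD, Real.le_logb_iff_rpow_le (by norm_num) hK0]; simpa using hK
  have hℓ1 : 1 ≤ ℓ := by
    rw [hℓ, Real.le_logb_iff_rpow_le (by norm_num) hn0]; simpa using hn2
  have hKD : (2 : ℝ) ^ D = K := Real.rpow_logb (by norm_num) (by norm_num) hK0
  have hnℓ : (2 : ℝ) ^ ℓ = n := Real.rpow_logb (by norm_num) (by norm_num) hn0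
  have hDD : D ≤ D ^ 2 * ℓ := by nlinarith
  by_cases hsmall : (n : ℝ) ≤ 1000 * D
  · obtain ⟨P, hP, he⟩ := Protocol.exists_depth_le_of_injective n f (fun x => x) Set.univ
      (fun _ _ _ _ h => h)
    have hcc : CCdist (fun x y => μA x * μB y) f 0.49 ≤ n + 1 := by
      refine CCdist_le P hP ?_
      have : commErr (fun x y => μA x * μB y) f P = 0 :=
        Finset.sum_eq_zero fun x _ => Finset.sum_eq_zero fun y _ => by simp [he]
      rw [this]; norm_num
    have hcc' : (CCdist (fun x y => μA x * μB y) f 0.49 : ℝ) ≤ n + 1 := by exact_mod_cast hcc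
    linarith
  push Not at hsmall
  have hε : (0 : ℝ) < 1 / (n : ℝ) ^ 2 := by positivity
  obtain ⟨w, hw0, hw1, hwδ, hwW, hwd⟩ := exists_weight_of_srecZmu_lt (f := f) hA hB true
    hε.le hε.le (V := 2 * K) (by
      have : srecZmu (fun x y => μA x * μB y) f true (1 / (n : ℝ) ^ 2) (1 / (n : ℝ) ^ 2) ≤ K :=
        le_max_right _ _
      linarith)
  obtain ⟨v, hv0, hv1, hvδ, hvW, hvd⟩ := exists_weight_of_srecZmu_lt (f := f) hA hB false
    hε.le hε.le (V := 2 * K) (by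
      have : srecZmu (fun x y => μA x * μB y) f false (1 / (n : ℝ) ^ 2) (1 / (n : ℝ) ^ 2) ≤ K :=
        le_max_left _ _
      linarith)
  set k := ⌈32 * K * n⌉₊ with hk
  set m := ⌈D + 2⌉₊ with hm
  have hmD : (m : ℝ) ≤ D + 3 := by
    have := Nat.ceil_lt_add_one (a := D + 2) (by linarith)
    linarith
  have hm2 : 2 * K ≤ 2 ^ m / 2 := by
    have h : (2 : ℝ) ^ (D + 2) ≤ 2 ^ (m : ℝ) :=
      Real.rpow_le_rpow_of_exponent_le (by norm_num) (Nat.le_ceil _)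
    rw [Real.rpow_natCast, Real.rpow_add (by norm_num), hKD] at h
    norm_num at h
    linarith
  have hkpow : (1 - 1 / (16 * (2 * K))) ^ k ≤ 1 / n :=
    one_sub_inv_pow_le (by linarith) hn0 (by
      have := Nat.le_ceil (32 * K * n)
      linarith)
  have hκ0 : 0 < √17 / n := by positivity
  have hκ5 : √17 / n ≤ 5 / n := by
    gcongr
    rw [Real.sqrt_le_left (by norm_num)]; norm_num
  obtain ⟨P, hleaf, herr⟩ := exists_protocol_rectErr_le (f := f) hA.1 hB.1 hw0 (W := 2 * K)
    (δ := 1 / (n : ℝ) ^ 2) (κ := √17 / n) (η := 1 / n) (by linarith) hwW hε hw1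
    (fun x y h => hwδ x y (by simp [h])) hκ0
    (by rw [div_pow, Real.sq_sqrt (by norm_num)]; ring) k hkpow m k Finset.univ Finset.univ
    v hv0 hv1 (fun x y h => hvδ x y (by simp [h])) (hvW.trans hm2)
  have herr' : commErr (fun x y => μA x * μB y) f P ≤ 0.49 := by
    rw [commErr_eq_rectErr]
    rw [rectMass_univ hA hB, mul_one] at herr
    have hn1000 : 1 / (n : ℝ) ≤ 1 / 1000 := by
      gcongr
      linarith
    have hε' : 1 / (n : ℝ) ^ 2 ≤ 1 / 1000 := by
      refine le_trans ?_ hn1000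
      gcongr
      nlinarith
    have h1 : (m : ℝ) * (2 * (√17 / n) + 1 / n) ≤ (D + 3) * (11 * (1 / n)) := by
      gcongr
      calc 2 * (√17 / n) + 1 / n ≤ 2 * (5 / n) + 1 / n := by gcongr
        _ = 11 * (1 / n) := by ring
    have h2 : D * (1 / n) ≤ 1 / 1000 := by
      rw [mul_one_div, div_le_iff₀ hn0]; linarith
    linarith
  have hk1 : ((k + 1 : ℕ) : ℝ) ≤ 2 ^ (6 + D + ℓ) := by
    have h := Nat.ceil_lt_add_one (a := 32 * K * n) (by positivity)
    rw [Real.rpow_add (by norm_num), Real.rpow_add (by norm_num), hKD, hnℓ]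
    norm_num
    nlinarith
  have hleaf' : (P.leavesCount : ℝ) ≤ 2 ^ (40 * (D ^ 2 * ℓ)) := by
    calc (P.leavesCount : ℝ) ≤ ((k + 1 : ℕ) : ℝ) ^ (m + 1) := by
          rw [← pow_succ'] at hleaf
          exact_mod_cast hleaf
      _ ≤ ((2 : ℝ) ^ (6 + D + ℓ)) ^ (m + 1) := by gcongr
      _ = 2 ^ ((6 + D + ℓ) * ((m + 1 : ℕ) : ℝ)) := by
          rw [← Real.rpow_natCast, ← Real.rpow_mul (by norm_num)]
      _ ≤ 2 ^ (40 * (D ^ 2 * ℓ)) := by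
          refine Real.rpow_le_rpow_of_exponent_le (by norm_num) ?_
          have h1 : 6 + D + ℓ ≤ 8 * (D * ℓ) := by nlinarith
          have h2 : ((m + 1 : ℕ) : ℝ) ≤ 5 * D := by push_cast; linarith
          calc (6 + D + ℓ) * ((m + 1 : ℕ) : ℝ) ≤ 8 * (D * ℓ) * (5 * D) := by gcongr
            _ = 40 * (D ^ 2 * ℓ) := by ring
  obtain ⟨P', hd, he⟩ := exists_protocol_depth_of_leavesCount P (by positivity) hleaf'
  have hcc : CCdist (fun x y => μA x * μB y) f 0.49 ≤ P'.depth := by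
    refine CCdist_le P' le_rfl ?_
    have : commErr (fun x y => μA x * μB y) f P' = commErr (fun x y => μA x * μB y) f P := by
      simp only [commErr, he]
    rw [this]; exact herr'
  have hcc' : (CCdist (fun x y => μA x * μB y) f 0.49 : ℝ) ≤ P'.depth := by exact_mod_cast hcc
  linarith
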